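/- Let G be a finite simple graph and let X be a nonempty twin cover of G, i.e. a set of vertices such that for every edge uv of G, either u ∈ X or v ∈ X, or u and v are true twins. Then χ_ssc(G) ≤ |X|. -/

import Mathlib

open SimpleGraph

/-- The closed neighbourhood of `v` in `G`. -/
def closedNbhd {V : Type*} (G : SimpleGraph V) (v : V) : Set V :=
  {u | u = v ∨ G.Adj v u}

/-- `c` is a `q`-subset square colouring of `G`: colours `1, …, q` are real colours and
colour `0` means "uncoloured"; every closed neighbourhood contains a coloured vertex, and
no nonzero colour appears on two distinct vertices of a closed neighbourhood. -/
def IsSubsetSquareColouring {V : Type*} (G : SimpleGraph V) (q : ℕ) (c : V → ℕ) : Prop :=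
  (∀ v, c v ≤ q) ∧
  (∀ v, ∃ u ∈ closedNbhd G v, c u ≠ 0) ∧
  (∀ v i, 1 ≤ i → i ≤ q →
    ∀ u ∈ closedNbhd G v, ∀ w ∈ closedNbhd G v, c u = i → c w = i → u = w)

/-- The subset square chromatic number `χ_ssc G`. -/
noncomputable def sscNum {V : Type*} (G : SimpleGraph V) : ℕ :=
  sInf {q | ∃ c : V → ℕ, IsSubsetSquareColouring G q c}

/-!
Colour the vertices of the twin cover `X` with pairwise distinct colours. A vertex whose closed
neighbourhood misses `X` has only true twins as neighbours, so the vertices of this kind split into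
cliques that are connected components of `G`. In each of them colour one vertex with colour `1` and
leave the rest uncoloured. A closed neighbourhood then either meets `X`, and its coloured vertices
all lie in `X`, or it misses `X` and has exactly one coloured vertex.
-/

section TwinCover

variable {V : Type*} {G : SimpleGraph V} {X T : Set V} {u v : V}

theorem mem_closedNbhd_self (G : SimpleGraph V) (v : V) : v ∈ closedNbhd G v :=
  Or.inl rfl

theorem mem_closedNbhd_comm : u ∈ closedNbhd G v ↔ v ∈ closedNbhd G u :=
  or_congr eq_comm (G.adj_comm v u)

theorem IsSubsetSquareColouring.sscNum_le {q : ℕ} {c : V → ℕ}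
    (hc : IsSubsetSquareColouring G q c) : sscNum G ≤ q :=
  Nat.sInf_le ⟨c, hc⟩

/-- `X` is a twin cover of `G`: every edge has an end in `X` or joins two true twins. Adjacent
vertices are true twins as soon as their closed neighbourhoods coincide. -/
def IsTwinCover (G : SimpleGraph V) (X : Set V) : Prop :=
  ∀ u v : V, G.Adj u v → u ∈ X ∨ v ∈ X ∨ closedNbhd G u = closedNbhd G v

/-- `T` is a transversal of the closed neighbourhoods missing `X`: it has exactly one vertex in each
of them and none in the closed neighbourhoods that meet `X`. Together with `X` it will be the set
of coloured vertices. -/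
structure IsTransversalAvoiding (G : SimpleGraph V) (X T : Set V) : Prop where
  existsUnique_mem : ∀ v, Disjoint (closedNbhd G v) X → ∃! t, t ∈ closedNbhd G v ∩ T
  disjoint_of_not_disjoint : ∀ v, ¬Disjoint (closedNbhd G v) X → Disjoint (closedNbhd G v) T

theorem IsTwinCover.closedNbhd_eq_of_disjoint (hX : IsTwinCover G X)
    (hv : Disjoint (closedNbhd G v) X) (hu : u ∈ closedNbhd G v) :
    closedNbhd G u = closedNbhd G v := by
  have not_mem_X {w : V} (hw : w ∈ closedNbhd G v) : w ∉ X := Set.disjoint_left.1 hv hw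
  obtain rfl | hadj := id hu
  · rfl
  · obtain hvX | huX | htwins := hX v u hadj
    · exact absurd hvX (not_mem_X (mem_closedNbhd_self G v))
    · exact absurd huX (not_mem_X hu)
    · exact htwins.symm

theorem IsTwinCover.exists_isTransversalAvoiding (hX : IsTwinCover G X) :
    ∃ T, IsTransversalAvoiding G X T := by
  obtain ⟨T, hTavoid, hTbij⟩ :=
    Set.exists_subset_bijOn {v | Disjoint (closedNbhd G v) X} (closedNbhd G)
  refine ⟨T, fun v hv ↦ ?_, fun v hv ↦ ?_⟩
  · obtain ⟨t, htT, ht⟩ := hTbij.surjOn (Set.mem_image_of_mem _ hv)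
    refine ⟨t, ⟨ht ▸ mem_closedNbhd_self G t, htT⟩, fun s ⟨hs, hsT⟩ ↦ ?_⟩
    exact hTbij.injOn hsT htT ((hX.closedNbhd_eq_of_disjoint hv hs).trans ht.symm)
  · refine Set.disjoint_left.2 fun t ht htT ↦ hv ?_
    rw [hX.closedNbhd_eq_of_disjoint (hTavoid htT) (mem_closedNbhd_comm.1 ht)]
    exact hTavoid htT

/-- The colouring that agrees with `f` on `X`, gives colour `1` to the vertices of `T` outside `X`
and leaves every other vertex uncoloured. -/
noncomputable def extendColouring (X T : Set V) (f : V → ℕ) : V → ℕ :=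
  open scoped Classical in X.piecewise f (T.indicator 1)

variable {f : V → ℕ}

theorem extendColouring_le {q : ℕ} (hq : 1 ≤ q) (hf : ∀ x ∈ X, f x ≤ q) (v : V) :
    extendColouring X T f v ≤ q := by
  by_cases hvX : v ∈ X
  · simpa [extendColouring, hvX] using hf v hvX
  · by_cases hvT : v ∈ T <;> simp [extendColouring, hvX, hvT, hq]

theorem extendColouring_eqOn_of_disjoint_left {s : Set V} (hs : Disjoint s X) :
    Set.EqOn (extendColouring X T f) (T.indicator 1) s := fun v hv ↦ by
  have hvX : v ∉ X := Set.disjoint_left.1 hs hv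
  simp [extendColouring, hvX]

theorem extendColouring_eqOn_of_disjoint_right {s : Set V} (hs : Disjoint s T) :
    Set.EqOn (extendColouring X T f) (X.indicator f) s := fun v hv ↦ by
  have hvT : v ∉ T := Set.disjoint_left.1 hs hv
  by_cases hvX : v ∈ X <;> simp [extendColouring, hvX, hvT]

theorem IsTransversalAvoiding.exists_extendColouring_ne_zero (hT : IsTransversalAvoiding G X T)
    (hf : ∀ x ∈ X, f x ≠ 0) (v : V) : ∃ u ∈ closedNbhd G v, extendColouring X T f u ≠ 0 := by
  by_cases hv : Disjoint (closedNbhd G v) X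
  · obtain ⟨t, ⟨ht, htT⟩, -⟩ := hT.existsUnique_mem v hv
    refine ⟨t, ht, ?_⟩
    simp [extendColouring_eqOn_of_disjoint_left hv ht, htT]
  · obtain ⟨x, hx, hxX⟩ := Set.not_disjoint_iff.1 hv
    refine ⟨x, hx, ?_⟩
    simpa [extendColouring, hxX] using hf x hxX

theorem IsTransversalAvoiding.injOn_extendColouring (hT : IsTransversalAvoiding G X T)
    (hf : Set.InjOn f X) (v : V) :
    Set.InjOn (extendColouring X T f)
      (closedNbhd G v ∩ Function.support (extendColouring X T f)) := by
  rintro u ⟨hu, hu0⟩ w ⟨hw, hw0⟩ huw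
  by_cases hv : Disjoint (closedNbhd G v) X
  · have mem_T {z : V} (hz : z ∈ closedNbhd G v) (hz0 : extendColouring X T f z ≠ 0) : z ∈ T :=
      Set.mem_of_indicator_ne_zero (extendColouring_eqOn_of_disjoint_left hv hz ▸ hz0)
    exact (hT.existsUnique_mem v hv).unique ⟨hu, mem_T hu hu0⟩ ⟨hw, mem_T hw hw0⟩
  · have eqOn : Set.EqOn (extendColouring X T f) (X.indicator f) (closedNbhd G v) :=
      extendColouring_eqOn_of_disjoint_right (hT.disjoint_of_not_disjoint v hv)
    have mem_X {z : V} (hz : z ∈ closedNbhd G v) (hz0 : extendColouring X T f z ≠ 0) : z ∈ X :=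
      Set.mem_of_indicator_ne_zero (eqOn hz ▸ hz0)
    have huX := mem_X hu hu0
    have hwX := mem_X hw hw0
    rw [eqOn hu, eqOn hw, Set.indicator_of_mem huX, Set.indicator_of_mem hwX] at huw
    exact hf huX hwX huw

theorem IsTransversalAvoiding.isSubsetSquareColouring_extendColouring {q : ℕ}
    (hT : IsTransversalAvoiding G X T) (hq : 1 ≤ q) (hmaps : Set.MapsTo f X (Set.Icc 1 q))
    (hinj : Set.InjOn f X) : IsSubsetSquareColouring G q (extendColouring X T f) := by
  refine ⟨extendColouring_le hq fun x hx ↦ (hmaps hx).2,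
    hT.exists_extendColouring_ne_zero fun x hx ↦ Nat.one_le_iff_ne_zero.1 (hmaps hx).1, ?_⟩
  rintro v i hi - u hu w hw rfl hwu
  have hu0 : extendColouring X T f u ≠ 0 := Nat.one_le_iff_ne_zero.1 hi
  exact hT.injOn_extendColouring hinj v ⟨hu, hu0⟩ ⟨hw, hwu.trans_ne hu0⟩ hwu.symm

end TwinCover

theorem exists_bijOn_Icc_one_card {α : Type*} (s : Finset α) :
    ∃ f : α → ℕ, Set.BijOn f s (Set.Icc 1 s.card) := by
  apply s.finite_toSet.exists_bijOn_of_encard_eq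
  rw [← Finset.coe_Icc, Set.encard_coe_eq_coe_finsetCard, Set.encard_coe_eq_coe_finsetCard,
    Nat.card_Icc, Nat.add_sub_cancel]

theorem stmt3_general {V : Type*} (G : SimpleGraph V) (X : Finset V) (hne : X.Nonempty)
    (hX : IsTwinCover G X) : sscNum G ≤ X.card := by
  obtain ⟨T, hT⟩ := hX.exists_isTransversalAvoiding
  obtain ⟨f, hf⟩ := exists_bijOn_Icc_one_card X
  exact (hT.isSubsetSquareColouring_extendColouring hne.card_pos hf.mapsTo hf.injOn).sscNum_le

theorem stmt3 {V : Type*} [Fintype V] (G : SimpleGraph V) (X : Finset V)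
    (hne : X.Nonempty)
    (htc : ∀ u v : V, G.Adj u v →
      u ∈ X ∨ v ∈ X ∨ closedNbhd G u = closedNbhd G v) :
    sscNum G ≤ X.card :=
  stmt3_general G X hne htc
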